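/- Let V be a module over the N=2 Ramond algebra 𝔤 with c₀ = 0, let a, b, c ∈ ℂ, and let (u_i)_{i∈ℤ} be vectors in V such that L_m u_i = (a + bm + i)u_{m+i}, H_m u_i = c·u_{m+i}, and G_m^- u_i = 0 for all m, i ∈ ℤ. Then for all r₁, r₂, s₁, s₂, i ∈ ℤ: G_{r₁}^- G_{r₂}^- G_{s₁}^+ G_{s₂}^+ u_i = (2b+c)(2+c−2b)(s₂−s₁)(r₁−r₂) u_{i+r₁+r₂+s₁+s₂}. -/

import Mathlib

open Submodule

/-- A module over the `N = 2` Ramond algebra `𝔤`: a `ℤ/2`-graded complex vector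
space `V = even ⊕ odd` with parity-preserving operators `L m`, `H m`,
parity-reversing operators `Gp m` (`G_m^+`), `Gm m` (`G_m^-`), and a scalar `c₀`
(the action of the central element `C`), subject to the defining relations. -/
structure RamondRep (V : Type) [AddCommGroup V] [Module ℂ V] : Type where
  L : ℤ → V →ₗ[ℂ] V
  H : ℤ → V →ₗ[ℂ] V
  Gp : ℤ → V →ₗ[ℂ] V
  Gm : ℤ → V →ₗ[ℂ] V
  c₀ : ℂ
  even : Submodule ℂ V
  odd : Submodule ℂ V
  grading : IsCompl even odd
  L_even : ∀ (m : ℤ), ∀ v ∈ even, L m v ∈ even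
  L_odd : ∀ (m : ℤ), ∀ v ∈ odd, L m v ∈ odd
  H_even : ∀ (m : ℤ), ∀ v ∈ even, H m v ∈ even
  H_odd : ∀ (m : ℤ), ∀ v ∈ odd, H m v ∈ odd
  Gp_even : ∀ (m : ℤ), ∀ v ∈ even, Gp m v ∈ odd
  Gp_odd : ∀ (m : ℤ), ∀ v ∈ odd, Gp m v ∈ even
  Gm_even : ∀ (m : ℤ), ∀ v ∈ even, Gm m v ∈ odd
  Gm_odd : ∀ (m : ℤ), ∀ v ∈ odd, Gm m v ∈ even
  rel_LL : ∀ (m n : ℤ) (v : V),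
    L m (L n v) - L n (L m v) =
      ((n : ℂ) - (m : ℂ)) • L (m + n) v +
        ((1 / 12 : ℂ) * ((n : ℂ) ^ 3 - (n : ℂ)) *
          (if m + n = 0 then (1 : ℂ) else 0) * c₀) • v
  rel_HH : ∀ (m n : ℤ) (v : V),
    H m (H n v) - H n (H m v) =
      ((1 / 3 : ℂ) * (m : ℂ) * (if m + n = 0 then (1 : ℂ) else 0) * c₀) • v
  rel_LH : ∀ (m n : ℤ) (v : V),
    L m (H n v) - H n (L m v) = (n : ℂ) • H (m + n) v
  rel_LGp : ∀ (m p : ℤ) (v : V),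
    L m (Gp p v) - Gp p (L m v) = ((p : ℂ) - (m : ℂ) / 2) • Gp (p + m) v
  rel_LGm : ∀ (m p : ℤ) (v : V),
    L m (Gm p v) - Gm p (L m v) = ((p : ℂ) - (m : ℂ) / 2) • Gm (p + m) v
  rel_HGp : ∀ (m p : ℤ) (v : V),
    H m (Gp p v) - Gp p (H m v) = Gp (m + p) v
  rel_HGm : ∀ (m p : ℤ) (v : V),
    H m (Gm p v) - Gm p (H m v) = -(Gm (m + p) v)
  rel_GpGm : ∀ (p q : ℤ) (v : V),
    Gp p (Gm q v) + Gm q (Gp p v) =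
      (-2 : ℂ) • L (p + q) v + ((p : ℂ) - (q : ℂ)) • H (p + q) v +
        ((1 / 3 : ℂ) * ((p : ℂ) ^ 2 - 1 / 4) *
          (if p + q = 0 then (1 : ℂ) else 0) * c₀) • v
  rel_GpGp : ∀ (p q : ℤ) (v : V), Gp p (Gp q v) + Gp q (Gp p v) = 0
  rel_GmGm : ∀ (p q : ℤ) (v : V), Gm p (Gm q v) + Gm q (Gm p v) = 0

namespace RamondRep

variable {V : Type} [AddCommGroup V] [Module ℂ V]

/-- The weight space `V_μ = {v ∈ V : L₀ v = μ v}`. -/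
def wt (ρ : RamondRep V) (μ : ℂ) : Submodule ℂ V :=
  Module.End.eigenspace (ρ.L 0) μ

/-- The parity components, indexed by `ZMod 2`. -/
def parity (ρ : RamondRep V) (τ : ZMod 2) : Submodule ℂ V :=
  if τ = 0 then ρ.even else ρ.odd

/-- `V` is a weight module: it is the sum of its weight spaces. -/
def IsWeight (ρ : RamondRep V) : Prop := (⨆ μ : ℂ, ρ.wt μ) = ⊤

/-- `V` is cuspidal: a weight module with uniformly bounded weight multiplicities
in each parity. -/
def Cuspidal (ρ : RamondRep V) : Prop :=
  ρ.IsWeight ∧ ∃ p : ℕ, ∀ (μ : ℂ) (τ : ZMod 2),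
    Module.rank ℂ ↥(ρ.wt μ ⊓ ρ.parity τ) ≤ (p : Cardinal)

/-- A subspace invariant under all the operators. -/
def IsSubmod (ρ : RamondRep V) (W : Submodule ℂ V) : Prop :=
  (∀ (m : ℤ), ∀ v ∈ W, ρ.L m v ∈ W) ∧ (∀ (m : ℤ), ∀ v ∈ W, ρ.H m v ∈ W) ∧
    (∀ (m : ℤ), ∀ v ∈ W, ρ.Gp m v ∈ W) ∧ (∀ (m : ℤ), ∀ v ∈ W, ρ.Gm m v ∈ W)

/-- A graded subspace invariant under all the operators. -/
def IsGradedSubmod (ρ : RamondRep V) (W : Submodule ℂ V) : Prop :=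
  ρ.IsSubmod W ∧ W = (W ⊓ ρ.even) ⊔ (W ⊓ ρ.odd)

/-- The trivial representation: all operators act by zero. -/
def IsTrivialRep (ρ : RamondRep V) : Prop :=
  ∀ (m : ℤ) (v : V), ρ.L m v = 0 ∧ ρ.H m v = 0 ∧ ρ.Gp m v = 0 ∧ ρ.Gm m v = 0

/-- `V` is simple: nontrivial, and its only graded submodules are `⊥` and `⊤`. -/
def IsSimple (ρ : RamondRep V) : Prop :=
  ¬ ρ.IsTrivialRep ∧
    ∀ W : Submodule ℂ V, ρ.IsGradedSubmod W → W = ⊥ ∨ W = ⊤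

/-- `V` is generated by `v` as a `𝔤`-module. -/
def GeneratedBy (ρ : RamondRep V) (v : V) : Prop :=
  ∀ W : Submodule ℂ V, ρ.IsSubmod W → v ∈ W → W = ⊤

/-- `V` is a highest weight module. -/
def IsHighestWeight (ρ : RamondRep V) : Prop :=
  ∃ v : V, v ≠ 0 ∧ ρ.GeneratedBy v ∧
    (∃ h h' : ℂ, ρ.L 0 v = h • v ∧ ρ.H 0 v = h' • v) ∧
    (∀ m : ℤ, 0 < m → ρ.L m v = 0 ∧ ρ.H m v = 0 ∧ ρ.Gp m v = 0 ∧ ρ.Gm m v = 0) ∧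
    ρ.Gp 0 v = 0

/-- `V` is a lowest weight module. -/
def IsLowestWeight (ρ : RamondRep V) : Prop :=
  ∃ v : V, v ≠ 0 ∧ ρ.GeneratedBy v ∧
    (∃ h h' : ℂ, ρ.L 0 v = h • v ∧ ρ.H 0 v = h' • v) ∧
    (∀ m : ℤ, m < 0 → ρ.L m v = 0 ∧ ρ.H m v = 0 ∧ ρ.Gp m v = 0 ∧ ρ.Gm m v = 0) ∧
    ρ.Gm 0 v = 0

end RamondRep

/-- Lemma 4.2 of the paper. If `(u i)` satisfies
`L_m u_i = (a + bm + i) u_{m+i}`, `H_m u_i = c u_{m+i}`, `G_m^- u_i = 0`, then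
`G_{r₁}^- G_{r₂}^- G_{s₁}^+ G_{s₂}^+ u_i
  = (2b+c)(2+c-2b)(s₂-s₁)(r₁-r₂) u_{i+r₁+r₂+s₁+s₂}`. -/
theorem stmt9 {V : Type} [AddCommGroup V] [Module ℂ V] (ρ : RamondRep V)
    (hc : ρ.c₀ = 0) (a b c : ℂ) (u : ℤ → V)
    (hL : ∀ m i : ℤ, ρ.L m (u i) = (a + b * (m : ℂ) + (i : ℂ)) • u (m + i))
    (hH : ∀ m i : ℤ, ρ.H m (u i) = c • u (m + i))
    (hG : ∀ m i : ℤ, ρ.Gm m (u i) = 0) :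
    ∀ r₁ r₂ s₁ s₂ i : ℤ,
      ρ.Gm r₁ (ρ.Gm r₂ (ρ.Gp s₁ (ρ.Gp s₂ (u i)))) =
        ((2 * b + c) * (2 + c - 2 * b) * ((s₂ : ℂ) - (s₁ : ℂ)) *
          ((r₁ : ℂ) - (r₂ : ℂ))) • u (i + r₁ + r₂ + s₁ + s₂) := by
  intro r₁ r₂ s₁ s₂ i
  -- the anticommutator with vanishing central charge
  have hA : ∀ (p q : ℤ) (v : V), ρ.Gm q (ρ.Gp p v) =
      (-2 : ℂ) • ρ.L (p + q) v + ((p : ℂ) - (q : ℂ)) • ρ.H (p + q) v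
        - ρ.Gp p (ρ.Gm q v) := by
    intro p q v
    have h := ρ.rel_GpGm p q v
    rw [hc, mul_zero, zero_smul, add_zero] at h
    rw [← h]; abel
  have hGG : ∀ p q j : ℤ, ρ.Gm q (ρ.Gp p (u j)) =
      (-2 * (a + b * ((p : ℂ) + (q : ℂ)) + (j : ℂ)) + ((p : ℂ) - (q : ℂ)) * c)
        • u (p + q + j) := by
    intro p q j
    rw [hA, hG, hL, hH, map_zero]
    push_cast
    module
  have hLG : ∀ (m p j : ℤ), ρ.L m (ρ.Gp p (u j)) =
      (a + b * (m : ℂ) + (j : ℂ)) • ρ.Gp p (u (m + j)) +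
        ((p : ℂ) - (m : ℂ) / 2) • ρ.Gp (p + m) (u j) := by
    intro m p j
    rw [← ρ.rel_LGp m p (u j), hL, map_smul]; abel
  have hHG : ∀ (m p j : ℤ), ρ.H m (ρ.Gp p (u j)) =
      c • ρ.Gp p (u (m + j)) + ρ.Gp (m + p) (u j) := by
    intro m p j
    rw [← ρ.rel_HGp m p (u j), hH, map_smul]; abel
  rw [hA s₁ r₂, hLG, hHG, hGG s₂ r₂ i]
  simp only [map_add, map_sub, map_smul, hGG]
  rw [show s₂ + r₁ + (s₁ + r₂ + i) = i + r₁ + r₂ + s₁ + s₂ by ring,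
    show s₂ + (s₁ + r₂) + r₁ + i = i + r₁ + r₂ + s₁ + s₂ by ring,
    show s₁ + r₂ + s₂ + r₁ + i = i + r₁ + r₂ + s₁ + s₂ by ring,
    show s₁ + r₁ + (s₂ + r₂ + i) = i + r₁ + r₂ + s₁ + s₂ by ring]
  push_cast
  module
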